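/- Let n and a be strictly positive integers and let Q ⊆ ℝⁿ be a convex polytope all of whose vertices lie in (1/a)·ℤⁿ, such that the only point of ℤⁿ in the interior of Q is 0. Then vol(Q) ≤ (7(a+1))^{n·2^{n+1}}. -/

import Mathlib

/-- A point of `ℝⁿ` lies in the lattice `ℤⁿ`. -/
def IsLatticePoint {n : ℕ} (u : Fin n → ℝ) : Prop :=
  ∀ i, ∃ m : ℤ, u i = (m : ℝ)


theorem aux_dirichlet {ι : Type*} [Fintype ι] [DecidableEq ι] (β : ι → ℝ) (T : ι → ℕ)
    (hT : ∀ i, 0 < T i) :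
    ∃ q : ℕ, 1 ≤ q ∧ q ≤ ∏ i, T i ∧ ∃ P : ι → ℤ, ∀ i, |(q : ℝ) * β i - P i| < 1 / (T i : ℝ) := by
  have hcard : (Fintype.piFinset (fun i => Finset.range (T i))).card
      < (Finset.range (∏ i, T i + 1)).card := by
    simp [Fintype.card_piFinset]
  obtain ⟨x, hx, y, hy, hxy, hf⟩ := Finset.exists_ne_map_eq_of_card_lt_of_maps_to hcard
    (f := fun (k : ℕ) (i : ι) => ⌊Int.fract ((k : ℝ) * β i) * T i⌋₊) (by
      intro k _
      rw [Finset.mem_coe, Fintype.mem_piFinset]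
      intro i
      rw [Finset.mem_range]
      have h0 : (0 : ℝ) < T i := by exact_mod_cast hT i
      rw [Nat.floor_lt (mul_nonneg (Int.fract_nonneg _) h0.le)]
      have := Int.fract_lt_one ((k : ℝ) * β i)
      nlinarith)
  have main : ∀ x y : ℕ, x < y → y < ∏ i, T i + 1 →
      (fun i : ι => ⌊Int.fract ((x : ℝ) * β i) * T i⌋₊) =
        (fun i : ι => ⌊Int.fract ((y : ℝ) * β i) * T i⌋₊) →
      ∃ q : ℕ, 1 ≤ q ∧ q ≤ ∏ i, T i ∧
        ∃ P : ι → ℤ, ∀ i, |(q : ℝ) * β i - P i| < 1 / (T i : ℝ) := by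
    intro x y hxy hy hf
    refine ⟨y - x, by omega, by omega, fun i => ⌊(y : ℝ) * β i⌋ - ⌊(x : ℝ) * β i⌋, fun i => ?_⟩
    have h0 : (0 : ℝ) < T i := by exact_mod_cast hT i
    have h := congrFun hf i
    have e : ((y - x : ℕ) : ℝ) * β i - ((⌊(y : ℝ) * β i⌋ - ⌊(x : ℝ) * β i⌋ : ℤ) : ℝ)
        = Int.fract ((y : ℝ) * β i) - Int.fract ((x : ℝ) * β i) := by
      rw [Nat.cast_sub hxy.le]; simp only [Int.fract]; push_cast; ring
    rw [e, lt_div_iff₀ h0, ← abs_of_pos h0, ← abs_mul]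
    have p1 := mul_nonneg (Int.fract_nonneg ((x : ℝ) * β i)) h0.le
    have p2 := mul_nonneg (Int.fract_nonneg ((y : ℝ) * β i)) h0.le
    have a1 := Nat.floor_le p1
    have a2 := Nat.lt_floor_add_one (Int.fract ((x : ℝ) * β i) * T i)
    have b1 := Nat.floor_le p2
    have b2 := Nat.lt_floor_add_one (Int.fract ((y : ℝ) * β i) * T i)
    rw [h] at a1 a2
    rw [abs_lt]
    constructor <;> nlinarith
  rcases lt_or_gt_of_ne hxy with h | h
  · exact main x y h (by simpa using hy) hf
  · exact main y x h (by simpa using hx) hf.symm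

theorem aux_approx {ι : Type*} [Fintype ι] [DecidableEq ι] (β : ι → ℝ) (hβ : ∀ i, 0 < β i)
    (hs : ∑ i, β i = 1) (a : ℕ) (ha : 0 < a) (J : Finset ι) (hJ : (Jᶜ).Nonempty)
    (h : (2 * ∏ i ∈ J, (((a : ℝ) + 2) / β i)) * ∑ i ∈ Jᶜ, β i ≤ 1) :
    ∃ q : ℕ, 1 ≤ q ∧ ∃ P : ι → ℤ, ∑ i, P i = q ∧ (∀ i ∈ Jᶜ, P i = 0) ∧
      ∀ i, (a : ℝ) * P i < (1 + a * q) * β i := by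
  have ha' : (1 : ℝ) ≤ a := by exact_mod_cast ha
  have hb1 : ∀ i, β i ≤ 1 := fun i => by
    rw [← hs]; exact Finset.single_le_sum (fun j _ => (hβ j).le) (Finset.mem_univ i)
  have hε : 0 < ∑ i ∈ Jᶜ, β i := Finset.sum_pos (fun i _ => hβ i) hJ
  have hsplit : ∑ i ∈ J, β i + ∑ i ∈ Jᶜ, β i = 1 := by
    rw [Finset.sum_add_sum_compl, hs]
  set ε := ∑ i ∈ Jᶜ, β i with hεd
  let T : ι → ℕ := fun i => if i ∈ J then ⌈((a : ℝ) + 1) / β i⌉₊ else 1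
  have hT : ∀ i, 0 < T i := by
    intro i
    simp only [T]
    split_ifs
    · exact Nat.ceil_pos.2 (div_pos (by linarith) (hβ i))
    · exact one_pos
  obtain ⟨q, hq1, hq2, P, hP⟩ := aux_dirichlet β T hT
  have hTprod : ((∏ i, T i : ℕ) : ℝ) ≤ ∏ i ∈ J, (((a : ℝ) + 2) / β i) := by
    simp only [T]
    rw [Finset.prod_ite_mem, Finset.univ_inter, Nat.cast_prod]
    apply Finset.prod_le_prod
    · intros; positivity
    · intro i _
      have h1 := (Nat.ceil_lt_add_one (a := ((a : ℝ) + 1) / β i)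
        (div_nonneg (by linarith) (hβ i).le)).le
      have h2 : (1 : ℝ) ≤ 1 / β i := by rw [le_div_iff₀ (hβ i)]; linarith [hb1 i]
      calc _ ≤ _ := h1
        _ ≤ ((a : ℝ) + 1) / β i + 1 / β i := by linarith
        _ = _ := by rw [← add_div]; ring
  have hqR : (q : ℝ) ≤ ∏ i ∈ J, (((a : ℝ) + 2) / β i) :=
    le_trans (by exact_mod_cast hq2) hTprod
  have hqε : q * ε ≤ 1 / 2 := by nlinarith
  have hTJ : ∀ i ∈ J, 1 / (T i : ℝ) ≤ β i / (a + 1) := by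
    intro i hi
    have : ((a : ℝ) + 1) / β i ≤ T i := by
      simp only [T, if_pos hi]; exact Nat.le_ceil _
    have h2 : 0 < ((a : ℝ) + 1) / β i := div_pos (by linarith) (hβ i)
    calc 1 / (T i : ℝ) ≤ 1 / (((a : ℝ) + 1) / β i) := one_div_le_one_div_of_le h2 this
      _ = _ := by rw [one_div_div]
  let P' : ι → ℤ := fun i => if i ∈ J then P i else 0
  have hsumP : ∑ i, P' i = ∑ i ∈ J, P i := by
    simp only [P']; rw [Finset.sum_ite_mem, Finset.univ_inter]
  have hdiff : (q : ℝ) - ∑ i ∈ J, (P i : ℝ) = ∑ i ∈ J, (q * β i - P i) + q * ε := by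
    rw [Finset.sum_sub_distrib, ← Finset.mul_sum]
    linear_combination (-(q : ℝ)) * hsplit
  have habs : |∑ i ∈ J, (q * β i - P i)| ≤ (1 - ε) / 2 := by
    calc _ ≤ ∑ i ∈ J, |(q * β i - P i)| := Finset.abs_sum_le_sum_abs _ _
      _ ≤ ∑ i ∈ J, β i / (a + 1) :=
        Finset.sum_le_sum fun i hi => (hP i).le.trans (hTJ i hi)
      _ ≤ ∑ i ∈ J, β i / 2 := Finset.sum_le_sum fun i hi =>
        div_le_div_of_nonneg_left (hβ i).le two_pos (by linarith)
      _ = _ := by rw [← Finset.sum_div]; congr 1; linarith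
  refine ⟨q, hq1, P', ?_, ?_, ?_⟩
  · rw [hsumP]
    have hlt : |(q : ℝ) - ∑ i ∈ J, (P i : ℝ)| < 1 := by
      rw [hdiff]
      have hq0 : (0 : ℝ) ≤ q * ε := by positivity
      rw [abs_le] at habs
      rw [abs_lt]
      constructor <;> linarith
    have : |(q : ℤ) - ∑ i ∈ J, P i| < 1 := by exact_mod_cast hlt
    rw [Int.abs_lt_one_iff] at this
    linarith
  · intro i hi
    simp only [P', if_neg (Finset.mem_compl.1 hi)]
  · intro i
    have hq0 : (0 : ℝ) ≤ a * q := by positivity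
    by_cases hi : i ∈ J
    · simp only [P', if_pos hi]
      have h1 := (abs_lt.1 ((hP i).trans_le (hTJ i hi))).1
      have h2 : β i / (a + 1) * a ≤ β i := by
        rw [div_mul_eq_mul_div, div_le_iff₀ (by linarith)]
        nlinarith [hβ i]
      nlinarith
    · simp only [P', if_neg hi]
      have := hβ i
      push_cast
      nlinarith [mul_nonneg hq0 this.le]

theorem aux_subset {ι : Type*} [DecidableEq ι] (β : ι → ℝ) (E : ℝ) :
    ∀ (s : ℕ) (S : Finset ι), S.card = s → 0 < s → E * (1 - (1 / 2) ^ s) ≤ ∑ i ∈ S, β i →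
      ∃ I ⊆ S, I.Nonempty ∧ ∀ i ∈ I, E * (1 / 2) ^ I.card ≤ β i := by
  intro s
  induction s with
  | zero => intro S _ h; omega
  | succ s ih =>
    intro S hS _ hsum
    by_cases hall : ∀ i ∈ S, E * (1 / 2) ^ S.card ≤ β i
    · exact ⟨S, subset_rfl, Finset.card_pos.1 (by omega), hall⟩
    · push Not at hall
      obtain ⟨i, hi, hlt⟩ := hall
      have hc : (S.erase i).card = s := by rw [Finset.card_erase_of_mem hi]; omega
      have hs2 := Finset.add_sum_erase S β hi
      rw [hS] at hlt
      have hsum' : E * (1 - (1 / 2) ^ s) < ∑ j ∈ S.erase i, β j := by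
        have : ((1 : ℝ) / 2) ^ s = 2 * (1 / 2) ^ (s + 1) := by rw [pow_succ]; ring
        rw [this]; linarith
      rcases Nat.eq_zero_or_pos s with h0 | h0
      · subst h0
        rw [Finset.card_eq_zero.1 hc] at hsum'
        simp at hsum'
      · obtain ⟨I, h1, h2, h3⟩ := ih (S.erase i) hc h0 hsum'.le
        exact ⟨I, h1.trans (Finset.erase_subset _ _), h2, h3⟩

theorem aux_nat (i : ℕ) (hi : 1 ≤ i) : i * i + i + 2 ≤ 2 * 2 ^ i := by
  induction i, hi using Nat.le_induction with
  | base => norm_num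
  | succ k hk ih =>
    rw [pow_succ]
    rcases Nat.lt_or_ge k 2 with h | h
    · have : k = 1 := by omega
      subst this; norm_num
    · nlinarith

theorem aux_num (i : ℕ) (hi : 1 ≤ i) (C D : ℝ) (hC : 1 ≤ C) (hD : 2 ≤ D) :
    (2 * C) * (D * (C * 2 ^ i * D) ^ i) ≤ (2 * C * D) ^ (2 ^ i) := by
  have h := aux_nat i hi
  have h1 : i + 1 ≤ 2 ^ i := Nat.lt_two_pow_self
  obtain ⟨r, hr⟩ := Nat.exists_eq_add_of_le h1
  have hii : i * i + 1 ≤ (i + 1 + r) + r := by omega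
  rw [hr]
  calc (2 * C) * (D * (C * 2 ^ i * D) ^ i)
      = 2 ^ (i * i + 1) * C ^ (i + 1) * D ^ (i + 1) := by
        rw [mul_pow, mul_pow, ← pow_mul]; ring
    _ ≤ 2 ^ ((i + 1 + r) + r) * C ^ (i + 1 + r) * D ^ (i + 1) := by
        have e1 : (2 : ℝ) ^ (i * i + 1) ≤ 2 ^ ((i + 1 + r) + r) :=
          pow_le_pow_right₀ (by norm_num) hii
        have e2 : C ^ (i + 1) ≤ C ^ (i + 1 + r) := pow_le_pow_right₀ hC (by omega)
        exact mul_le_mul_of_nonneg_right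
          (mul_le_mul e1 e2 (by positivity) (by positivity)) (by positivity)
    _ = 2 ^ (i + 1 + r) * C ^ (i + 1 + r) * D ^ (i + 1) * 2 ^ r := by ring
    _ ≤ 2 ^ (i + 1 + r) * C ^ (i + 1 + r) * D ^ (i + 1) * D ^ r := by gcongr
    _ = _ := by rw [mul_pow, mul_pow]; ring

theorem aux_bound {ι : Type*} [Fintype ι] [DecidableEq ι] (β : ι → ℝ) (hβ : ∀ i, 0 < β i)
    (hb1 : ∀ i, β i ≤ 1) (C B : ℝ) (hC : 1 ≤ C) (hB : 4 * C ≤ B)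
    (h : ∀ J : Finset ι, (Jᶜ).Nonempty → 1 < (2 * ∏ i ∈ J, (C / β i)) * ∑ i ∈ Jᶜ, β i) :
    ∀ i, 1 / β i ≤ B ^ (2 ^ (Fintype.card ι)) := by
  have hone : ∀ i, 1 ≤ C / β i := fun i => by
    rw [le_div_iff₀ (hβ i)]; linarith [hb1 i]
  have hprod1 : ∀ J : Finset ι, 1 ≤ ∏ i ∈ J, (C / β i) := fun J =>
    Finset.one_le_prod fun i _ => hone i
  have step : ∀ (k : ℕ) (J : Finset ι), (Jᶜ).card = k →
      2 * C * (2 * ∏ i ∈ J, (C / β i)) ≤ B ^ (2 ^ J.card) →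
      2 * C * (2 * ∏ i, (C / β i)) ≤ B ^ (2 ^ (Fintype.card ι)) := by
    intro k
    induction k using Nat.strong_induction_on with
    | _ k ih =>
    intro J hk hJ
    rcases (Jᶜ).eq_empty_or_nonempty with he | hne
    · have : J = Finset.univ := by simpa using he
      subst this
      simpa using hJ
    · have hlt := h J hne
      set D := 2 * ∏ i ∈ J, (C / β i) with hD
      have hD2 : 2 ≤ D := by linarith [hprod1 J]
      have hDp : 0 < D := by linarith
      have hE : 1 / D ≤ ∑ i ∈ Jᶜ, β i := by
        rw [div_le_iff₀ hDp]; linarith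
      have hEE : 1 / D * (1 - (1 / 2) ^ (Jᶜ).card) ≤ ∑ i ∈ Jᶜ, β i := by
        refine le_trans ?_ hE
        have : (0 : ℝ) ≤ (1 / 2) ^ (Jᶜ).card := by positivity
        have h2 : 0 < 1 / D := by positivity
        nlinarith
      obtain ⟨I, hI1, hI2, hI3⟩ := aux_subset β (1 / D) _ (Jᶜ) rfl (Finset.card_pos.2 hne) hEE
      have hdisj : Disjoint J I := Finset.disjoint_left.2 fun x hx hxI =>
        (Finset.mem_compl.1 (hI1 hxI)) hx
      have hIc := Finset.card_pos.2 hI2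
      have hcu : (J ∪ I).card = J.card + I.card := Finset.card_union_of_disjoint hdisj
      have hI : ∏ i ∈ I, (C / β i) ≤ (C * 2 ^ I.card * D) ^ I.card := by
        rw [← Finset.prod_const]
        apply Finset.prod_le_prod
        · intro i _; linarith [hone i]
        · intro i hi
          have h3 := hI3 i hi
          rw [div_le_iff₀ (hβ i)]
          have e : C * 2 ^ I.card * D * (1 / D * (1 / 2) ^ I.card) = C := by
            rw [one_div_pow]; field_simp
          calc C = _ := e.symm
            _ ≤ _ := by gcongr
      refine ih ((J ∪ I)ᶜ).card ?_ (J ∪ I) rfl ?_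
      · rw [Finset.card_compl, hcu, ← hk, Finset.card_compl]
        have := Finset.card_le_univ (J ∪ I)
        omega
      · rw [Finset.prod_union hdisj, hcu, pow_add, pow_mul]
        calc 2 * C * (2 * ((∏ i ∈ J, (C / β i)) * ∏ i ∈ I, (C / β i)))
            = 2 * C * (D * ∏ i ∈ I, (C / β i)) := by rw [hD]; ring
          _ ≤ 2 * C * (D * (C * 2 ^ I.card * D) ^ I.card) := by gcongr
          _ ≤ (2 * C * D) ^ (2 ^ I.card) := aux_num _ hIc C D hC hD2
          _ ≤ _ := by gcongr
  have fin := step _ ∅ rfl (by simp; linarith)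
  intro i
  refine le_trans ?_ fin
  have h1 : C / β i ≤ ∏ i, (C / β i) := by
    rw [← Finset.mul_prod_erase Finset.univ _ (Finset.mem_univ i)]
    exact le_mul_of_one_le_right (by linarith [hone i])
      (Finset.one_le_prod fun i _ => hone i)
  have h2 : 1 / β i ≤ C / β i := div_le_div_of_nonneg_right hC (hβ i).le
  have h3 := hprod1 Finset.univ
  nlinarith

theorem aux_conic {E : Type*} [AddCommGroup E] [Module ℝ E] [DecidableEq E] :
    ∀ (k : ℕ) (t : Finset E) (c : E → ℝ), t.card = k → (∀ e ∈ t, 0 ≤ c e) →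
    ∃ t' ⊆ t, ∃ c' : E → ℝ, (∀ e ∈ t', 0 < c' e) ∧
      LinearIndependent ℝ ((↑) : t' → E) ∧ ∑ e ∈ t', c' e • e = ∑ e ∈ t, c e • e := by
  intro k
  induction k with
  | zero =>
    intro t c ht _
    rw [Finset.card_eq_zero] at ht
    subst ht
    exact ⟨∅, subset_rfl, c, by simp, linearIndependent_empty_type, rfl⟩
  | succ k ih =>
    intro t c ht hc
    have red : ∀ (d : E → ℝ) (e0 : E), e0 ∈ t → (∀ e ∈ t, 0 ≤ d e) → d e0 = 0 →
        ∑ e ∈ t, d e • e = ∑ e ∈ t, c e • e →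
        ∃ t' ⊆ t, ∃ c' : E → ℝ, (∀ e ∈ t', 0 < c' e) ∧
          LinearIndependent ℝ ((↑) : t' → E) ∧ ∑ e ∈ t', c' e • e = ∑ e ∈ t, c e • e := by
      intro d e0 he0 hd h0 hs
      obtain ⟨t', h1, c', h2, h3, h4⟩ := ih (t.erase e0) d
        (by rw [Finset.card_erase_of_mem he0]; omega)
        (fun e he => hd e (Finset.mem_of_mem_erase he))
      refine ⟨t', h1.trans (Finset.erase_subset _ _), c', h2, h3, ?_⟩
      rw [h4, ← hs]
      exact Finset.sum_erase _ (by rw [h0, zero_smul])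
    by_cases hpos : ∀ e ∈ t, 0 < c e
    · by_cases hli : LinearIndependent ℝ ((↑) : t → E)
      · exact ⟨t, subset_rfl, c, hpos, hli, rfl⟩
      · have hrel : ∃ g : E → ℝ, ∑ e ∈ t, g e • e = 0 ∧ ∃ e ∈ t, 0 < g e := by
          rw [Fintype.not_linearIndependent_iff] at hli
          obtain ⟨g, hg, i, hi⟩ := hli
          let g' : E → ℝ := fun e => if h : e ∈ t then g ⟨e, h⟩ else 0
          have hg' : ∑ e ∈ t, g' e • e = 0 := by
            rw [← Finset.sum_coe_sort, ← hg]
            refine Finset.sum_congr rfl fun e _ => ?_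
            simp [g']
          have hi' : g' i ≠ 0 := by simpa [g'] using hi
          rcases lt_or_gt_of_ne hi' with h | h
          · refine ⟨fun e => - g' e, ?_, i, i.2, by simpa using h⟩
            simp [neg_smul, hg']
          · exact ⟨g', hg', i, i.2, h⟩
        obtain ⟨g, hg, e1, he1, hge1⟩ := hrel
        obtain ⟨e0, hm, hmin⟩ := Finset.exists_min_image (t.filter fun e => 0 < g e)
          (fun e => c e / g e) ⟨e1, Finset.mem_filter.2 ⟨he1, hge1⟩⟩
        rw [Finset.mem_filter] at hm
        refine red (fun e => c e - c e0 / g e0 * g e) e0 hm.1 ?_ ?_ ?_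
        · intro e he
          have hr : 0 ≤ c e0 / g e0 := div_nonneg (hc _ hm.1) hm.2.le
          rcases lt_or_ge 0 (g e) with h | h
          · have := hmin e (Finset.mem_filter.2 ⟨he, h⟩)
            rw [le_div_iff₀ h] at this
            simpa using this
          · have := hc e he
            nlinarith
        · simp [hm.2.ne']
        · simp only [sub_smul, mul_smul, Finset.sum_sub_distrib, ← Finset.smul_sum, hg,
            smul_zero, sub_zero]
    · push Not at hpos
      obtain ⟨e0, he0, h0⟩ := hpos
      exact red c e0 he0 hc (le_antisymm h0 (hc _ he0)) rfl

theorem aux_key {n : ℕ} {ι : Type*} [Fintype ι] [DecidableEq ι] (a : ℕ) (ha : 0 < a)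
    (Q : Set (Fin n → ℝ)) (hQ : Convex ℝ Q)
    (hint : {u ∈ interior Q | IsLatticePoint u} = {0})
    (z : ι → Fin n → ℝ) (hzQ : ∀ i, z i ∈ Q) (hz : ∀ i j, ∃ m : ℤ, z i j = (m : ℝ) / (a : ℝ))
    (β : ι → ℝ) (hβ : ∀ i, 0 < β i) (hs : ∑ i, β i = 1) (hβz : ∑ i, β i • z i = 0)
    (huniq : ∀ c : ι → ℝ, ∑ i, c i = 1 → ∑ i, c i • z i = 0 → c = β) :
    ∀ i, 1 / β i ≤ (7 * ((a : ℝ) + 1)) ^ (2 ^ (Fintype.card ι)) := by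
  have ha' : (1 : ℝ) ≤ a := by exact_mod_cast ha
  have ha0 : (a : ℝ) ≠ 0 := by positivity
  have hb1 : ∀ i, β i ≤ 1 := fun i => by
    rw [← hs]; exact Finset.single_le_sum (fun j _ => (hβ j).le) (Finset.mem_univ i)
  refine aux_bound β hβ hb1 ((a : ℝ) + 2) _ (by linarith) (by linarith) ?_
  intro J hJ
  by_contra hcon
  obtain ⟨q, hq, P, hPs, hP0, hP⟩ := aux_approx β hβ hs a ha J hJ (not_lt.1 hcon)
  obtain ⟨i0, hi0⟩ := hJ
  let c : ι → ℝ := fun i => (1 + a * q) * β i - a * P i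
  have hc : ∀ i, 0 < c i := fun i => sub_pos.2 (hP i)
  have hPs' : ∑ i, (P i : ℝ) = q := by exact_mod_cast hPs
  have hcs : ∑ i, c i = 1 := by
    simp only [c]
    rw [Finset.sum_sub_distrib, ← Finset.mul_sum, ← Finset.mul_sum, hs, hPs']; ring
  have hcz : ∑ i, c i • z i = - ∑ i, (a * P i : ℝ) • z i := by
    simp only [c, sub_smul, mul_smul, Finset.sum_sub_distrib, ← Finset.smul_sum, hβz, smul_zero,
      zero_sub]
  have h0int : (0 : Fin n → ℝ) ∈ interior Q := by
    have : (0 : Fin n → ℝ) ∈ {u ∈ interior Q | IsLatticePoint u} := by rw [hint]; rfl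
    exact this.1
  -- margin
  obtain ⟨η, hη0, hη1, hη⟩ : ∃ η : ℝ, 0 < η ∧ η < 1 ∧ ∀ i, η * β i ≤ c i := by
    obtain ⟨i1, -, h1⟩ := Finset.exists_min_image Finset.univ c ⟨i0, Finset.mem_univ _⟩
    refine ⟨min (c i1) (1 / 2), lt_min (hc _) (by norm_num),
      (min_le_right _ _).trans_lt (by norm_num), fun i => ?_⟩
    have h2 := h1 i (Finset.mem_univ _)
    have h3 := min_le_left (c i1) (1 / 2)
    have h4 : 0 < min (c i1) (1 / 2) := lt_min (hc _) (by norm_num)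
    nlinarith [hb1 i, hβ i]
  have hwint : ∑ i, c i • z i ∈ interior Q := by
    have hy : ∑ i, ((c i - η * β i) / (1 - η)) • z i ∈ Q := by
      refine hQ.sum_mem (fun i _ => div_nonneg (sub_nonneg.2 (hη i)) (by linarith)) ?_
        (fun i _ => hzQ i)
      rw [← Finset.sum_div, Finset.sum_sub_distrib, ← Finset.mul_sum, hcs, hs, mul_one]
      exact div_self (by linarith)
    have := hQ.combo_interior_self_mem_interior h0int hy hη0 (by linarith : (0 : ℝ) ≤ 1 - η)
      (by ring)
    convert this using 1
    have hne : (1 - η) ≠ 0 := by linarith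
    rw [smul_zero, zero_add, Finset.smul_sum]
    simp only [smul_smul, mul_div_cancel₀ _ hne]
    simp only [sub_smul, mul_smul, Finset.sum_sub_distrib, ← Finset.smul_sum, hβz, smul_zero,
      sub_zero]
  have hwlat : IsLatticePoint (∑ i, c i • z i) := by
    intro j
    choose m hm using hz
    refine ⟨- ∑ i, P i * m i j, ?_⟩
    rw [hcz]
    simp only [Pi.neg_apply, Finset.sum_apply, Pi.smul_apply, smul_eq_mul]
    push_cast
    congr 1
    refine Finset.sum_congr rfl fun i _ => ?_
    rw [hm]; field_simp
  have hw0 : ∑ i, c i • z i = 0 := by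
    have : ∑ i, c i • z i ∈ {u ∈ interior Q | IsLatticePoint u} := ⟨hwint, hwlat⟩
    rw [hint] at this
    exact this
  have heq := congrFun (huniq c hcs hw0) i0
  simp only [c, hP0 i0 hi0] at heq
  have hq' : (1 : ℝ) ≤ q := by exact_mod_cast hq
  have := hβ i0
  have : 0 < (a : ℝ) * q * β i0 := by positivity
  push_cast at heq
  nlinarith

theorem aux_asym (n a : ℕ) (ha : 0 < a)
    (S : Finset (Fin n → ℝ))
    (hSlat : ∀ s ∈ S, ∀ i, ∃ m : ℤ, s i = (m : ℝ) / (a : ℝ))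
    (Q : Set (Fin n → ℝ)) (hQ : Q = convexHull ℝ (S : Set (Fin n → ℝ)))
    (hint : {u ∈ interior Q | IsLatticePoint u} = {0}) (R : ℝ) (hR1 : 1 < R)
    (hR : (7 * ((a : ℝ) + 1)) ^ (2 ^ (n + 1)) ≤ R) (v : Fin n → ℝ) (hv : v ∈ S) :
    (-(1 / (R - 1))) • v ∈ Q := by
  classical
  have ha' : (1 : ℝ) ≤ a := by exact_mod_cast ha
  have hconv : Convex ℝ Q := hQ ▸ convex_convexHull ℝ _
  have hSQ : ∀ s ∈ S, s ∈ Q := fun s hs => hQ ▸ subset_convexHull ℝ _ hs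
  have h0int : (0 : Fin n → ℝ) ∈ interior Q := by
    have : (0 : Fin n → ℝ) ∈ {u ∈ interior Q | IsLatticePoint u} := by rw [hint]; rfl
    exact this.1
  obtain ⟨t, ht, htQ⟩ : ∃ t : ℝ, 0 < t ∧ (-t) • v ∈ Q := by
    have hcont : Filter.Tendsto (fun t : ℝ => (-t) • v) (nhds 0) (nhds 0) := by
      have : Continuous (fun t : ℝ => (-t) • v) := by fun_prop
      simpa using this.tendsto 0
    have hev := hcont.eventually (mem_interior_iff_mem_nhds.1 h0int)
    have hev2 := hev.filter_mono (nhdsWithin_le_nhds (s := Set.Ioi 0))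
    obtain ⟨t, h1, h2⟩ := (hev2.and self_mem_nhdsWithin).exists
    exact ⟨t, h2, h1⟩
  rw [hQ, Finset.mem_convexHull'] at htQ
  obtain ⟨w, hw0, -, hw⟩ := htQ
  obtain ⟨T, hTS, c, hc, hli, hcs⟩ := aux_conic _ S (fun e => w e / t) rfl
    (fun e he => div_nonneg (hw0 e he) ht.le)
  have hcv : ∑ e : T, c e • (e : Fin n → ℝ) = -v := by
    rw [Finset.sum_coe_sort T (fun e => c e • e), hcs]
    simp only [div_eq_inv_mul, mul_smul, ← Finset.smul_sum, hw]
    rw [smul_smul, mul_neg, inv_mul_cancel₀ ht.ne', neg_one_smul]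
  have hcp : ∀ e : T, 0 < c e := fun e => hc e e.2
  set s := ∑ e : T, c e with hsd
  have hs0 : 0 ≤ s := Finset.sum_nonneg fun e _ => (hcp e).le
  have hs1 : (1 + s) ≠ 0 := by linarith
  let z : Option T → Fin n → ℝ := fun o => o.elim v (fun e => e)
  let β : Option T → ℝ := fun o => o.elim (1 / (1 + s)) (fun e => c e / (1 + s))
  have hcard : Fintype.card (Option T) ≤ n + 1 := by
    rw [Fintype.card_option]
    have := hli.fintype_card_le_finrank
    simp only [Module.finrank_fintype_fun_eq_card, Fintype.card_fin] at this
    omega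
  have key := aux_key a ha Q hconv hint z
    (by rintro (_ | e)
        · exact hSQ v hv
        · exact hSQ _ (hTS e.2))
    (by rintro (_ | e)
        · exact hSlat v hv
        · exact hSlat _ (hTS e.2)) β
    (by rintro (_ | e)
        · simp only [β, Option.elim]; positivity
        · simp only [β, Option.elim]; have := hcp e; positivity)
    (by rw [Fintype.sum_option]
        simp only [β, Option.elim]
        rw [← Finset.sum_div, ← hsd, ← add_div, div_self hs1])
    (by rw [Fintype.sum_option]
        simp only [β, z, Option.elim, div_eq_inv_mul, mul_smul, ← Finset.smul_sum, hcv]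
        simp)
    (by
      intro d hd1 hd2
      rw [Fintype.sum_option] at hd1 hd2
      simp only [z, Option.elim] at hd2
      have hrel : ∑ e : T, (d (some e) - d none * c e) • (e : Fin n → ℝ) = 0 := by
        simp only [sub_smul, mul_smul, Finset.sum_sub_distrib, ← Finset.smul_sum, hcv]
        rw [← hd2, smul_neg]; abel
      have hz := Fintype.linearIndependent_iff.1 hli _ hrel
      have hd : ∀ e : T, d (some e) = d none * c e := fun e => by linarith [hz e]
      simp only [hd, ← Finset.mul_sum, ← hsd] at hd1
      have hn : d none = 1 / (1 + s) := by rw [eq_div_iff hs1]; linarith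
      funext o
      rcases o with _ | e
      · simp only [β, Option.elim, hn]
      · simp only [β, Option.elim, hd, hn]; ring) none
  have hsR : 1 + s ≤ R := by
    have : 1 / β none = 1 + s := by simp [β]
    rw [this] at key
    refine key.trans (le_trans ?_ hR)
    exact pow_le_pow_right₀ (by linarith) (Nat.pow_le_pow_right two_pos hcard)
  have hR0 : 0 < R - 1 := by linarith
  have fin : ∑ o : Option T, (o.elim (1 - s / (R - 1)) (fun e => c e / (R - 1)) : ℝ) •
      (o.elim 0 (fun e => e) : Fin n → ℝ) ∈ Q := by
    refine hconv.sum_mem ?_ ?_ ?_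
    · rintro (_ | e) _
      · simp only [Option.elim]
        rw [sub_nonneg, div_le_one hR0]; linarith
      · simp only [Option.elim]; exact div_nonneg (hcp e).le hR0.le
    · rw [Fintype.sum_option]
      simp only [Option.elim]
      rw [← Finset.sum_div, ← hsd]; ring
    · rintro (_ | e) _
      · exact interior_subset h0int
      · exact hSQ _ (hTS e.2)
  convert fin using 1
  rw [Fintype.sum_option]
  simp only [Option.elim, div_eq_inv_mul, mul_smul, ← Finset.smul_sum, hcv]
  simp

open scoped Pointwise in
theorem aux_main (n a : ℕ) (hn : 0 < n) (ha : 0 < a)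
    (S : Finset (Fin n → ℝ))
    (hSlat : ∀ s ∈ S, ∀ i, ∃ m : ℤ, s i = (m : ℝ) / (a : ℝ))
    (Q : Set (Fin n → ℝ)) (hQ : Q = convexHull ℝ (S : Set (Fin n → ℝ)))
    (hint : {u ∈ interior Q | IsLatticePoint u} = {0}) :
    MeasureTheory.volume Q ≤
      ENNReal.ofReal ((7 * ((a : ℝ) + 1)) ^ (n * 2 ^ (n + 1))) := by
  have ha' : (1 : ℝ) ≤ a := by exact_mod_cast ha
  have hconv : Convex ℝ Q := hQ ▸ convex_convexHull ℝ _
  obtain ⟨R, hRd⟩ : ∃ R : ℝ, R = (7 * ((a : ℝ) + 1)) ^ (2 ^ (n + 1)) := ⟨_, rfl⟩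
  have hR1 : 1 < R := by
    rw [hRd]; exact one_lt_pow₀ (by linarith) (by positivity)
  have hR0 : 0 < R := by linarith
  have hR10 : R - 1 ≠ 0 := by linarith
  have hasym : ∀ x ∈ Q, (-(1 / (R - 1))) • x ∈ Q := by
    have hc : Convex ℝ {x : Fin n → ℝ | (-(1 / (R - 1))) • x ∈ Q} :=
      hconv.linear_preimage (LinearMap.lsmul ℝ (Fin n → ℝ) (-(1 / (R - 1))))
    intro x hx
    have hsub : convexHull ℝ (S : Set (Fin n → ℝ)) ⊆
        {x : Fin n → ℝ | (-(1 / (R - 1))) • x ∈ Q} :=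
      convexHull_min (fun v hv => aux_asym n a ha S hSlat Q hQ hint R hR1 hRd.ge v hv) hc
    exact hsub (hQ ▸ hx)
  rw [mul_comm n, pow_mul, ← hRd]
  by_contra hcon
  rw [not_le] at hcon
  have hvol : MeasureTheory.volume (interior Q) = MeasureTheory.volume Q :=
    MeasureTheory.measure_congr (interior_ae_eq_of_null_frontier
      (hconv.addHaar_frontier MeasureTheory.volume))
  have hF : MeasureTheory.volume (ZSpan.fundamentalDomain (Pi.basisFun ℝ (Fin n))) = 1 := by
    rw [ZSpan.fundamentalDomain_pi_basisFun, MeasureTheory.volume_pi_pi]; simp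
  have hlt : MeasureTheory.volume (ZSpan.fundamentalDomain (Pi.basisFun ℝ (Fin n))) <
      MeasureTheory.volume (R⁻¹ • interior Q) := by
    rw [hF, MeasureTheory.Measure.addHaar_smul_of_nonneg _ (inv_nonneg.2 hR0.le), hvol,
      Module.finrank_fintype_fun_eq_card, Fintype.card_fin]
    have hp : 0 < R ^ n := by positivity
    have e : (1 : ENNReal) = ENNReal.ofReal (R⁻¹ ^ n) * ENNReal.ofReal (R ^ n) := by
      rw [← ENNReal.ofReal_mul (by positivity), ← mul_pow, inv_mul_cancel₀ hR0.ne']; simp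
    rw [e]
    exact ENNReal.mul_lt_mul_right (by simp; positivity) ENNReal.ofReal_ne_top hcon
  have : Countable (Submodule.span ℤ (Set.range (Pi.basisFun ℝ (Fin n)))).toAddSubgroup :=
    inferInstanceAs (Countable (Submodule.span ℤ (Set.range (Pi.basisFun ℝ (Fin n)))))
  obtain ⟨x, y, hxy, h⟩ := MeasureTheory.exists_pair_mem_lattice_not_disjoint_vadd
    (ZSpan.isAddFundamentalDomain' (Pi.basisFun ℝ (Fin n)) MeasureTheory.volume)
    ((hconv.interior.smul _).nullMeasurableSet _) hlt
  obtain ⟨_, ⟨_, ⟨p, hp, rfl⟩, rfl⟩, _, ⟨r, hr, rfl⟩, hvw⟩ := Set.not_disjoint_iff.mp h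
  have hdiff : ((y : Fin n → ℝ) - x) = R⁻¹ • p - R⁻¹ • r := by
    simp only [AddSubgroup.vadd_def, vadd_eq_add] at hvw
    rw [sub_eq_sub_iff_add_eq_add, hvw, add_comm]
  have hmem : ((y : Fin n → ℝ) - x) ∈ interior Q := by
    have hi := hconv.combo_interior_self_mem_interior hp (hasym r (interior_subset hr))
      (inv_pos.2 hR0) (sub_nonneg.2 (inv_le_one_of_one_le₀ hR1.le)) (by ring)
    rw [hdiff]
    convert hi using 1
    rw [smul_smul, sub_eq_add_neg, ← neg_smul]
    congr 2
    field_simp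
  have hlat : IsLatticePoint ((y : Fin n → ℝ) - (x : Fin n → ℝ)) := by
    intro i
    have := (y - x).2
    rw [Submodule.mem_toAddSubgroup, Module.Basis.mem_span_iff_repr_mem] at this
    obtain ⟨m, hm⟩ := this i
    exact ⟨m, by simpa using hm.symm⟩
  have h0 : ((y : Fin n → ℝ) - (x : Fin n → ℝ)) ∈ {u ∈ interior Q | IsLatticePoint u} := ⟨hmem, hlat⟩
  rw [hint, Set.mem_singleton_iff, sub_eq_zero] at h0
  exact hxy (Subtype.ext h0.symm)

/-- Volume bound from the proof of Theorem 3.7.  Let `n, a ≥ 1` and let `Q ⊆ ℝⁿ` be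
a convex polytope all of whose vertices lie in `(1/a)·ℤⁿ`, such that the only point
of `ℤⁿ` in the interior of `Q` is `0`.  Then `vol(Q) ≤ (7(a+1))^(n·2^(n+1))`. -/
theorem stmt12 (n a : ℕ) (hn : 0 < n) (ha : 0 < a)
    (S : Finset (Fin n → ℝ))
    (hSlat : ∀ s ∈ S, ∀ i, ∃ m : ℤ, s i = (m : ℝ) / (a : ℝ))
    (Q : Set (Fin n → ℝ)) (hQ : Q = convexHull ℝ (S : Set (Fin n → ℝ)))
    (hint : {u ∈ interior Q | IsLatticePoint u} = {0}) :
    MeasureTheory.volume Q ≤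
      ENNReal.ofReal ((7 * ((a : ℝ) + 1)) ^ (n * 2 ^ (n + 1))) := by
  exact aux_main n a hn ha S hSlat Q hQ hint
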